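/- Let (x, y) be an η-diagonal pair in a *-probability space (A, φ). Fix n ≥ 1 and χ : {1,…,n} → {l,r}, and let χ̂ : {1,…,2n} → {l,r} be defined by χ̂(2k−1) = χ̂(2k) = χ(k). Put a_k = xx* if χ(k) = l and a_k = yy* if χ(k) = r, and put b_k = x*x if χ(k) = l and b_k = y*y if χ(k) = r. Then: (i) if χ is not constant, B_χ(a₁,…,aₙ) = 0 and B_χ(b₁,…,bₙ) = 0; (ii) if χ is constantly l, then B_χ(a₁,…,aₙ) = B_{χ̂}(x, x*, x, x*, …, x, x*) and B_χ(b₁,…,bₙ) = B_{χ̂}(x*, x, …, x*, x); (iii) if χ is constantly r, then B_χ(a₁,…,aₙ) = B_{χ̂}(y, y*, …, y, y*) and B_χ(b₁,…,bₙ) = B_{χ̂}(y*, y, …, y*, y), where in each case the 2n arguments of B_{χ̂} are listed in the original index order. (Since χ̂ is constant in cases (ii) and (iii), B_{χ̂} is the ordinary Boolean cumulant, the signed sum over interval partitions of {1,…,2n}.) In particular, the bi-Boolean η-series of the pairs (xx*, yy*) and (x*x, y*y) are diagonal. -/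

import Mathlib

open scoped BigOperators

/-- Rank realizing the χ-order: left indices in increasing order, then right indices
in decreasing order. `true` stands for `l`, `false` for `r`. -/
def chiRank {n : ℕ} (χ : Fin n → Bool) (i : Fin n) : ℕ :=
  if χ i then (i : ℕ) else 2 * n - (i : ℕ)

/-- The strict order `≺_χ`. -/
def chiLT {n : ℕ} (χ : Fin n → Bool) (i j : Fin n) : Prop :=
  chiRank χ i < chiRank χ j

/-- A finset is a χ-interval iff it is order-convex for `≺_χ`. -/
def IsChiInterval {n : ℕ} (χ : Fin n → Bool) (V : Finset (Fin n)) : Prop :=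
  ∀ i j k : Fin n, i ∈ V → k ∈ V → chiLT χ i j → chiLT χ j k → j ∈ V

/-- A set partition of `{1, …, n}` encoded as a finset of (nonempty) blocks. -/
def IsPartition {n : ℕ} (P : Finset (Finset (Fin n))) : Prop :=
  (∅ ∉ P) ∧ ∀ i : Fin n, ∃! V : Finset (Fin n), V ∈ P ∧ i ∈ V

open scoped Classical in
/-- The set of bi-interval partitions relative to χ. -/
noncomputable def BIset {n : ℕ} (χ : Fin n → Bool) : Finset (Finset (Finset (Fin n))) :=
  Finset.univ.filter (fun P => IsPartition P ∧ ∀ V ∈ P, IsChiInterval χ V)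

/-- `φ_V(a₁,…,aₙ)`: apply φ to the product of the `a_i`, `i ∈ V`, in increasing index order. -/
def phiV {A : Type*} [Monoid A] (φ : A → ℂ) {n : ℕ} (a : Fin n → A) (V : Finset (Fin n)) : ℂ :=
  φ ((V.sort (· ≤ ·)).map a).prod

/-- The Boolean (l,r)-cumulant `B_χ`. -/
noncomputable def Bcum {A : Type*} [Monoid A] (φ : A → ℂ) {n : ℕ} (χ : Fin n → Bool)
    (a : Fin n → A) : ℂ :=
  ∑ P ∈ BIset χ, (-1 : ℂ) ^ (P.card - 1) * ∏ V ∈ P, phiV φ a V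

/-- The list of indices `1, …, n` sorted in the `≺_χ` order. -/
def chiSorted {n : ℕ} (χ : Fin n → Bool) : List (Fin n) :=
  (List.finRange n).mergeSort (fun i j => chiRank χ i ≤ chiRank χ j)

/-- The element of the pair `(x, y)` selected by side (`true` = `x`-side) and
star-parity (`true` = starred). -/
def pairElem {A : Type*} [Monoid A] [StarMul A] (x y : A) : Bool → Bool → A
  | true, false => x
  | true, true => star x
  | false, false => y
  | false, true => star y

/-- A pair `(x, y)` in a `*`-probability space is η-diagonal: every Boolean
(l,r)-cumulant with entries from `{x, x*}` at left positions and `{y, y*}` at right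
positions vanishes unless `n` is even and, in the `≺_χ`-rearranged tuple, the
star-parities alternate (entries from `{x, x*}` automatically precede those from
`{y, y*}`). -/
def EtaDiagonalPair {A : Type*} [Monoid A] [StarMul A] (φ : A → ℂ) (x y : A) : Prop :=
  ∀ n : ℕ, 1 ≤ n → ∀ χ ε : Fin n → Bool,
    ¬ (Even n ∧ ((chiSorted χ).map ε).Chain' (· ≠ ·)) →
    Bcum φ χ (fun i => pairElem x y (χ i) (ε i)) = 0

/-- The doubling `χ̂` of `χ`. -/
def hatChi {n : ℕ} (χ : Fin n → Bool) : Fin (2 * n) → Bool :=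
  fun i => χ ⟨i.val / 2, by omega⟩

/-!
The signed sum over interval partitions satisfies a recursion: split off the last block and sum
over its smallest element. Run this recursion for the cumulant over the doubled index set. A
term whose last block starts inside a pair contains the cumulant of an odd number of entries,
which vanishes for an η-diagonal pair. The remaining terms are exactly those of the recursion
for the products, so that `B_χ` of the products equals `B_χ̂` of the factors for every `χ`. If
`χ` is not constant, the last left and the last right doubled position are adjacent for `≺_χ̂`.
Both are the second position of their pair, so they carry the same star, the stars do not
alternate, and `B_χ̂` is zero.
-/

namespace BooleanCumulant

section IntervalPartition

variable {ι κ α β R : Type*} [LinearOrder α] [LinearOrder β] [CommRing R]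

/-- Partitions of a finite set `S` into intervals for the order that the rank function `r`
induces on `S`. An order on a variable subset is needed because a cumulant of products is
computed by recursion over initial segments. -/
structure IsIntervalPartition (r : ι → α) (S : Finset ι) (P : Finset (Finset ι)) : Prop where
  empty_notMem : ∅ ∉ P
  subset : ∀ V ∈ P, V ⊆ S
  existsUnique : ∀ i ∈ S, ∃! V, V ∈ P ∧ i ∈ V
  convex : ∀ V ∈ P, ∀ i ∈ V, ∀ k ∈ V, ∀ j ∈ S, r i < r j → r j < r k → j ∈ V

open scoped Classical in
/-- The sum `∑ (-1) ^ |P| * ∏ V ∈ P, m V` over the interval partitions `P` of `S`. Its sign differs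
from that of the Boolean cumulant so that its value at `S = ∅` is `1`, which makes it the
convolution inverse of the moments `m`. -/
noncomputable def intervalSum (r : ι → α) (m : Finset ι → R) (S : Finset ι) : R :=
  ∑ P ∈ S.powerset.powerset with IsIntervalPartition r S P, (-1) ^ P.card * ∏ V ∈ P, m V

lemma mem_filter_isIntervalPartition {r : ι → α} {S : Finset ι} {P : Finset (Finset ι)}
    [DecidablePred (IsIntervalPartition r S)] :
    P ∈ S.powerset.powerset.filter (IsIntervalPartition r S) ↔ IsIntervalPartition r S P := by
  simp only [Finset.mem_filter, Finset.mem_powerset, and_iff_right_iff_imp]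
  exact fun hP V hV ↦ Finset.mem_powerset.2 (hP.subset V hV)

lemma isIntervalPartition_empty_iff {r : ι → α} {P : Finset (Finset ι)} :
    IsIntervalPartition r ∅ P ↔ P = ∅ := by
  refine ⟨fun hP ↦ Finset.eq_empty_of_forall_notMem fun V hV ↦ ?_, ?_⟩
  · exact hP.empty_notMem (Finset.subset_empty.1 (hP.subset V hV) ▸ hV)
  · rintro rfl
    constructor <;> simp

lemma intervalSum_empty (r : ι → α) (m : Finset ι → R) : intervalSum r m ∅ = 1 := by
  classical
  have hP : (∅ : Finset ι).powerset.powerset.filter (IsIntervalPartition r ∅) = {∅} := by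
    ext P
    rw [mem_filter_isIntervalPartition, isIntervalPartition_empty_iff, Finset.mem_singleton]
  rw [intervalSum, Finset.sum_congr hP fun _ _ ↦ rfl]
  simp

namespace IsIntervalPartition

variable {r : ι → α} {S : Finset ι} {t u : ι} {P Q Q' : Finset (Finset ι)}

lemma upper_notMem (hQ : IsIntervalPartition r {i ∈ S | r i < r t} Q) (ht : t ∈ S) :
    ({i ∈ S | r t ≤ r i} : Finset ι) ∉ Q := fun h ↦ by
  have := hQ.subset _ h (Finset.mem_filter.2 ⟨ht, le_rfl⟩)
  simp at this

lemma exists_upper_mem (hP : IsIntervalPartition r S P) (hr : Function.Injective r)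
    (hS : S.Nonempty) : ∃ t ∈ S, ({i ∈ S | r t ≤ r i} : Finset ι) ∈ P := by
  obtain ⟨s, hs, hmax⟩ := S.exists_max_image r hS
  obtain ⟨V, ⟨hV, hsV⟩, -⟩ := hP.existsUnique s hs
  obtain ⟨t, htV, hmin⟩ := V.exists_min_image r ⟨s, hsV⟩
  refine ⟨t, hP.subset V hV htV, ?_⟩
  convert hV
  ext j
  refine ⟨fun hj ↦ ?_, fun hj ↦ Finset.mem_filter.2 ⟨hP.subset V hV hj, hmin j hj⟩⟩
  obtain ⟨hjS, htj⟩ := Finset.mem_filter.1 hj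
  rcases htj.eq_or_lt with htj | htj
  · exact hr htj ▸ htV
  rcases (hmax j hjS).eq_or_lt with hjs | hjs
  · exact hr hjs ▸ hsV
  · exact hP.convex V hV t htV s hsV j hjS htj hjs

variable [DecidableEq ι]

lemma insert_upper (hQ : IsIntervalPartition r {i ∈ S | r i < r t} Q) (ht : t ∈ S) :
    IsIntervalPartition r S (insert {i ∈ S | r t ≤ r i} Q) where
  empty_notMem h := by
    rcases Finset.mem_insert.1 h with h | h
    · exact Finset.notMem_empty t (h ▸ by simp [ht])
    · exact hQ.empty_notMem h
  subset := by
    rintro V hV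
    rcases Finset.mem_insert.1 hV with rfl | hV
    · exact Finset.filter_subset _ _
    · exact (hQ.subset V hV).trans (Finset.filter_subset _ _)
  existsUnique i hi := by
    have hlow : ∀ V ∈ Q, i ∈ V → r i < r t := fun V hV hiV ↦
      (Finset.mem_filter.1 (hQ.subset V hV hiV)).2
    rcases lt_or_ge (r i) (r t) with hit | hti
    · obtain ⟨V, ⟨hV, hiV⟩, huniq⟩ := hQ.existsUnique i (by simp [hi, hit])
      refine ⟨V, ⟨Finset.mem_insert_of_mem hV, hiV⟩, ?_⟩
      rintro V' ⟨hV', hiV'⟩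
      rcases Finset.mem_insert.1 hV' with rfl | hV'
      · exact absurd hit (Finset.mem_filter.1 hiV').2.not_gt
      · exact huniq V' ⟨hV', hiV'⟩
    · refine ⟨_, ⟨Finset.mem_insert_self _ _, by simp [hi, hti]⟩, ?_⟩
      rintro V' ⟨hV', hiV'⟩
      exact (Finset.mem_insert.1 hV').resolve_right fun hV' ↦ hti.not_gt (hlow V' hV' hiV')
  convex V hV i hi k hk j hj hij hjk := by
    rcases Finset.mem_insert.1 hV with rfl | hV
    · simp only [Finset.mem_filter] at hi ⊢
      exact ⟨hj, hi.2.trans hij.le⟩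
    · have hkt := (Finset.mem_filter.1 (hQ.subset V hV hk)).2
      exact hQ.convex V hV i hi k hk j (by simp [hj, hjk.trans hkt]) hij hjk

lemma erase_upper (hP : IsIntervalPartition r S P)
    (hV : ({i ∈ S | r t ≤ r i} : Finset ι) ∈ P) :
    IsIntervalPartition r {i ∈ S | r i < r t} (P.erase {i ∈ S | r t ≤ r i}) where
  empty_notMem h := hP.empty_notMem (Finset.mem_of_mem_erase h)
  subset V' hV' i hi := by
    obtain ⟨hne, hV'⟩ := Finset.mem_erase.1 hV'
    have hiS := hP.subset V' hV' hi
    refine Finset.mem_filter.2 ⟨hiS, not_le.1 fun hti ↦ hne ?_⟩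
    exact (hP.existsUnique i hiS).unique ⟨hV', hi⟩ ⟨hV, by simp [hiS, hti]⟩
  existsUnique i hi := by
    obtain ⟨hiS, hit⟩ := Finset.mem_filter.1 hi
    obtain ⟨V', ⟨hV', hiV'⟩, huniq⟩ := hP.existsUnique i hiS
    refine ⟨V', ⟨Finset.mem_erase.2 ⟨?_, hV'⟩, hiV'⟩, fun V'' hV'' ↦
      huniq V'' ⟨Finset.mem_of_mem_erase hV''.1, hV''.2⟩⟩
    rintro rfl
    exact hit.not_ge (Finset.mem_filter.1 hiV').2
  convex V' hV' i hi k hk j hj :=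
    hP.convex V' (Finset.mem_of_mem_erase hV') i hi k hk j (Finset.mem_filter.1 hj).1

lemma insert_upper_inj (hr : Function.Injective r)
    (hQ : IsIntervalPartition r {i ∈ S | r i < r t} Q) (ht : t ∈ S)
    (hQ' : IsIntervalPartition r {i ∈ S | r i < r u} Q') (hu : u ∈ S)
    (h : insert ({i ∈ S | r t ≤ r i} : Finset ι) Q = insert {i ∈ S | r u ≤ r i} Q') :
    t = u ∧ Q = Q' := by
  have le_of_mem {a b : ι} {Q : Finset (Finset ι)} (ha : a ∈ S) (hb : b ∈ S)
      (hQ : IsIntervalPartition r {i ∈ S | r i < r b} Q)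
      (hmem : {i ∈ S | r a ≤ r i} ∈ insert {i ∈ S | r b ≤ r i} Q) : r b ≤ r a := by
    rcases Finset.mem_insert.1 hmem with heq | hmem
    · have haa : a ∈ S.filter (r a ≤ r ·) := Finset.mem_filter.2 ⟨ha, le_rfl⟩
      rw [heq] at haa
      exact (Finset.mem_filter.1 haa).2
    · by_contra! hab
      have hbb := hQ.subset _ hmem (Finset.mem_filter.2 ⟨hb, hab.le⟩)
      exact lt_irrefl _ (Finset.mem_filter.1 hbb).2
  obtain rfl : t = u := hr <| le_antisymm
    (le_of_mem hu ht hQ (h ▸ Finset.mem_insert_self _ _))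
    (le_of_mem ht hu hQ' (h ▸ Finset.mem_insert_self _ _))
  refine ⟨rfl, ?_⟩
  rw [← Finset.erase_insert (hQ.upper_notMem ht), h, Finset.erase_insert (hQ'.upper_notMem ht)]

end IsIntervalPartition

/-- The sum is split according to the smallest element `t` of the last block. -/
lemma intervalSum_eq_neg_sum {r : ι → α} (hr : Function.Injective r) (m : Finset ι → R)
    {S : Finset ι} (hS : S.Nonempty) :
    intervalSum r m S = -∑ t ∈ S, intervalSum r m {i ∈ S | r i < r t} * m {i ∈ S | r t ≤ r i} := by
  classical
  simp only [intervalSum, Finset.sum_mul]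
  rw [Finset.sum_sigma', ← Finset.sum_neg_distrib]
  symm
  refine Finset.sum_bij (fun x _ ↦ insert ({i ∈ S | r x.1 ≤ r i} : Finset ι) x.2) ?_ ?_ ?_ ?_ <;>
    simp only [Finset.mem_sigma, mem_filter_isIntervalPartition]
  · rintro ⟨t, Q⟩ ⟨ht, hQ⟩
    exact hQ.insert_upper ht
  · rintro ⟨t, Q⟩ ⟨ht, hQ⟩ ⟨u, Q'⟩ ⟨hu, hQ'⟩ h
    obtain ⟨rfl, rfl⟩ := hQ.insert_upper_inj hr ht hQ' hu h
    rfl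
  · intro P hP
    obtain ⟨t, ht, hV⟩ := hP.exists_upper_mem hr hS
    exact ⟨⟨t, _⟩, ⟨ht, hP.erase_upper hV⟩, Finset.insert_erase hV⟩
  · rintro ⟨t, Q⟩ ⟨ht, hQ⟩
    have hV := hQ.upper_notMem ht
    rw [Finset.prod_insert hV, Finset.card_insert_of_notMem hV]
    ring

lemma intervalSum_map {r : ι → α} {r' : κ → β} (hr : Function.Injective r) (e : κ ↪ ι)
    (he : ∀ i j, r' i < r' j ↔ r (e i) < r (e j)) (m : Finset ι → R) (S : Finset κ) :
    intervalSum r m (S.map e) = intervalSum r' (fun V ↦ m (V.map e)) S := by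
  have he_le : ∀ i j, r' i ≤ r' j ↔ r (e i) ≤ r (e j) := fun i j ↦ by
    rw [← not_lt, he, not_lt]
  have hr' : Function.Injective r' := fun i j hij ↦
    e.injective <| hr <| le_antisymm ((he_le i j).1 hij.le) ((he_le j i).1 hij.ge)
  induction S using Finset.strongInduction with
  | H S ih =>
  rcases S.eq_empty_or_nonempty with rfl | hS
  · simp only [Finset.map_empty, intervalSum_empty]
  rw [intervalSum_eq_neg_sum hr m (hS.map), intervalSum_eq_neg_sum hr' _ hS, Finset.sum_map]
  refine congrArg _ (Finset.sum_congr rfl fun t ht ↦ ?_)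
  have hlt : S.filter (r' · < r' t) ⊂ S :=
    Finset.filter_ssubset.2 ⟨t, ht, lt_irrefl (r' t)⟩
  simp only [Finset.filter_map, Function.comp_def, ← he, ← he_le]
  rw [ih _ hlt]

/-- In the recursion for the right-hand side only the terms survive whose last block starts with the
first element of a fibre of `p`; they are the terms of the recursion for the left-hand side. -/
lemma intervalSum_preimage [Fintype κ] [DecidableEq ι] {r : ι → α} {r' : κ → β}
    (hr : Function.Injective r) (hr' : Function.Injective r') {p : κ → ι}
    (hp : Function.Surjective p) (hpr : ∀ i j, r (p i) < r (p j) → r' i < r' j)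
    (m : Finset κ → R)
    (hzero : ∀ (T : Finset ι) (i j : κ), p i ∈ T → p j = p i → r' j < r' i →
      intervalSum r' m {l | p l ∈ T ∧ r' l < r' i} = 0) (T : Finset ι) :
    intervalSum r (fun U ↦ m {i | p i ∈ U}) T = intervalSum r' m {i | p i ∈ T} := by
  induction T using Finset.strongInduction with
  | H T ih =>
  rcases T.eq_empty_or_nonempty with rfl | hT
  · simp only [Finset.notMem_empty, Finset.filter_false, intervalSum_empty]
  have hT' : ({i | p i ∈ T} : Finset κ).Nonempty := by
    obtain ⟨k, hk⟩ := hT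
    obtain ⟨i, rfl⟩ := hp k
    exact ⟨i, by simpa using hk⟩
  rw [intervalSum_eq_neg_sum hr _ hT, intervalSum_eq_neg_sum hr' _ hT',
    ← Finset.sum_fiberwise_of_maps_to (g := p) (t := T) (fun i hi ↦ by simpa using hi)]
  refine congrArg _ (Finset.sum_congr rfl fun k hk ↦ ?_)
  simp only [Finset.filter_filter]
  obtain ⟨i, hi, hmin⟩ := Finset.exists_min_image ({i | p i ∈ T ∧ p i = k} : Finset κ) r' (by
    obtain ⟨i, rfl⟩ := hp k
    exact ⟨i, by simpa using hk⟩)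
  simp only [Finset.mem_filter_univ] at hi hmin
  obtain ⟨hiT, rfl⟩ := hi
  have lt_iff : ∀ l, p l ∈ T → (r' l < r' i ↔ r (p l) < r (p i)) := fun l hl ↦ by
    refine ⟨fun hli ↦ ?_, hpr l i⟩
    rcases lt_trichotomy (r (p l)) (r (p i)) with h | h | h
    · exact h
    · exact absurd (hmin l ⟨hl, hr h⟩) hli.not_ge
    · exact absurd (hpr i l h) hli.not_gt
  rw [Finset.sum_eq_single_of_mem i (by simp [hiT])]
  · rw [ih _ (Finset.filter_ssubset.2 ⟨p i, hiT, lt_irrefl (r (p i))⟩)]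
    congr 2 <;> ext l <;> simp only [Finset.mem_filter, Finset.mem_univ, true_and]
    · exact and_congr_right fun hl ↦ (lt_iff l hl).symm
    · refine and_congr_right fun hl ↦ ?_
      rw [← not_lt, ← lt_iff l hl, not_lt]
  · intro j hj hji
    obtain ⟨hjT, hjk⟩ := (Finset.mem_filter_univ _).1 hj
    have hij : r' i < r' j := (hmin j ⟨hjT, hjk⟩).lt_of_ne fun h ↦ hji (hr' h).symm
    rw [hzero T j i hjT hjk.symm hij, zero_mul]

end IntervalPartition

section ChiOrder

variable {A : Type*} [Monoid A] {n : ℕ}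

lemma chiRank_of_eq_true {χ : Fin n → Bool} {i : Fin n} (h : χ i = true) : chiRank χ i = i :=
  if_pos h

lemma chiRank_of_eq_false {χ : Fin n → Bool} {i : Fin n} (h : χ i = false) :
    chiRank χ i = 2 * n - i :=
  if_neg (Bool.eq_false_iff.1 h)

lemma chiRank_injective (χ : Fin n → Bool) : Function.Injective (chiRank χ) := by
  intro i j h
  unfold chiRank at h
  split_ifs at h <;> omega

lemma chiRank_comp_lt_iff {k : ℕ} (χ : Fin n → Bool) (e : Fin k ↪o Fin n) (i j : Fin k) :
    chiRank (χ ∘ e) i < chiRank (χ ∘ e) j ↔ chiRank χ (e i) < chiRank χ (e j) := by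
  have hij : i.val < j.val ↔ (e i).val < (e j).val := e.lt_iff_lt.symm
  have hji : j.val < i.val ↔ (e j).val < (e i).val := e.lt_iff_lt.symm
  simp only [chiRank, Function.comp_apply]
  split_ifs <;> omega

lemma mem_BIset {χ : Fin n → Bool} {P : Finset (Finset (Fin n))} :
    P ∈ BIset χ ↔ IsIntervalPartition (chiRank χ) Finset.univ P := by
  simp only [BIset, Finset.mem_filter, Finset.mem_univ, true_and]
  constructor
  · rintro ⟨⟨hempty, huniq⟩, hconv⟩
    exact ⟨hempty, fun V _ ↦ Finset.subset_univ V, fun i _ ↦ huniq i,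
      fun V hV i hi k hk j _ ↦ hconv V hV i j k hi hk⟩
  · intro hP
    exact ⟨⟨hP.empty_notMem, fun i ↦ hP.existsUnique i (Finset.mem_univ i)⟩,
      fun V hV i j k hi hk ↦ hP.convex V hV i hi k hk j (Finset.mem_univ j)⟩

lemma Bcum_eq_neg_intervalSum (φ : A → ℂ) (hn : 1 ≤ n) (χ : Fin n → Bool) (a : Fin n → A) :
    Bcum φ χ a = -intervalSum (chiRank χ) (phiV φ a) Finset.univ := by
  classical
  have hBI : Finset.univ.powerset.powerset.filter
      (IsIntervalPartition (chiRank χ) Finset.univ) = BIset χ := by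
    ext P
    rw [mem_filter_isIntervalPartition, mem_BIset]
  rw [Bcum, intervalSum, Finset.sum_congr hBI fun _ _ ↦ rfl, ← Finset.sum_neg_distrib]
  refine Finset.sum_congr rfl fun P hP ↦ ?_
  obtain ⟨V, ⟨hV, -⟩, -⟩ := (mem_BIset.1 hP).existsUnique ⟨0, hn⟩ (Finset.mem_univ _)
  obtain ⟨k, hk⟩ := Nat.exists_eq_add_of_lt (Finset.card_pos.2 ⟨V, hV⟩)
  rw [hk, Nat.add_sub_cancel, pow_succ]
  ring

lemma phiV_map {k : ℕ} (φ : A → ℂ) (a : Fin n → A) (e : Fin k ↪o Fin n) (V : Finset (Fin k)) :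
    phiV φ a (V.map e.toEmbedding) = phiV φ (a ∘ e) V := by
  rw [phiV, ← StrictMonoOn.map_finsetSort _ _ (e.strictMono.strictMonoOn _), List.map_map]
  rfl

lemma intervalSum_eq_neg_Bcum (φ : A → ℂ) (χ : Fin n → Bool) (a : Fin n → A)
    {S : Finset (Fin n)} (hS : S.Nonempty) :
    intervalSum (chiRank χ) (phiV φ a) S =
      -Bcum φ (χ ∘ S.orderEmbOfFin rfl) (a ∘ S.orderEmbOfFin rfl) := by
  rw [Bcum_eq_neg_intervalSum φ hS.card_pos, neg_neg]
  conv_lhs => rw [← S.map_orderEmbOfFin_univ rfl]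
  rw [intervalSum_map (chiRank_injective χ) _ (chiRank_comp_lt_iff χ (S.orderEmbOfFin rfl))]
  simp only [phiV_map]

lemma rel_of_isChain_of_consecutive {ι α : Type*} [LinearOrder α] {r : ι → α} {l : List ι}
    {R : ι → ι → Prop} (hl : l.Pairwise (r · < r ·)) (hR : l.IsChain R) {i j : ι}
    (hi : i ∈ l) (hj : j ∈ l) (hij : r i < r j) (hgap : ∀ k ∈ l, r i < r k → r j ≤ r k) :
    R i j := by
  obtain ⟨a, ha, rfl⟩ := List.getElem_of_mem hi
  obtain ⟨b, hb, rfl⟩ := List.getElem_of_mem hj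
  rw [List.pairwise_iff_getElem] at hl
  have hab : a < b := by
    by_contra! hba
    rcases hba.eq_or_lt with rfl | hba
    · exact lt_irrefl _ hij
    · exact lt_asymm hij (hl b a hb ha hba)
  obtain rfl : b = a + 1 := by
    by_contra hne
    have hb' : a + 1 < b := by omega
    exact (hgap _ (List.getElem_mem _) (hl a (a + 1) ha (by omega) (by omega))).not_gt
      (hl (a + 1) b (by omega) hb hb')
  exact List.isChain_iff_getElem.1 hR a hb

lemma mem_chiSorted (χ : Fin n → Bool) (i : Fin n) : i ∈ chiSorted χ := by
  simp [chiSorted]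

lemma pairwise_chiSorted (χ : Fin n → Bool) :
    (chiSorted χ).Pairwise (chiRank χ · < chiRank χ ·) := by
  have hle : (chiSorted χ).Pairwise (fun i j ↦ decide (chiRank χ i ≤ chiRank χ j) = true) :=
    List.pairwise_mergeSort
      (fun i j k hij hjk ↦ decide_eq_true ((of_decide_eq_true hij).trans (of_decide_eq_true hjk)))
      (fun i j ↦ by simpa using le_total _ _) _
  have hnodup : (chiSorted χ).Nodup :=
    (List.mergeSort_perm _ _).nodup_iff.2 (List.nodup_finRange n)
  exact (hle.and hnodup).imp fun h ↦
    (of_decide_eq_true h.1).lt_of_ne fun heq ↦ h.2 (chiRank_injective χ heq)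

end ChiOrder

section Doubling

variable {A : Type*} [Monoid A] {n : ℕ}

/-- The position `k` of the pair `{2k, 2k + 1}` of doubled (zero-based) positions containing `i`. -/
def half (i : Fin (2 * n)) : Fin n := ⟨i.val / 2, by omega⟩

/-- The first doubled position lying over `k`. -/
def evenLift (k : Fin n) : Fin (2 * n) := ⟨2 * k.val, by omega⟩

/-- The second doubled position lying over `k`. -/
def oddLift (k : Fin n) : Fin (2 * n) := ⟨2 * k.val + 1, by omega⟩

lemma val_half (i : Fin (2 * n)) : (half i : ℕ) = i / 2 := rfl

lemma val_oddLift (k : Fin n) : (oddLift k : ℕ) = 2 * k + 1 := rfl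

lemma half_eq_iff {i : Fin (2 * n)} {k : Fin n} :
    half i = k ↔ i = evenLift k ∨ i = oddLift k := by
  simp only [half, evenLift, oddLift, Fin.ext_iff]
  omega

lemma half_evenLift (k : Fin n) : half (evenLift k) = k := half_eq_iff.2 (.inl rfl)

lemma half_oddLift (k : Fin n) : half (oddLift k) = k := half_eq_iff.2 (.inr rfl)

lemma eq_of_half_eq {i j l : Fin (2 * n)} (hl : half l = half i) (hj : half j = half i)
    (hli : l ≠ i) (hji : j ≠ i) : l = j := by
  rw [Fin.ext_iff, val_half, val_half] at hl hj
  omega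

lemma evenLift_lt_oddLift (k : Fin n) : evenLift k < oddLift k := Nat.lt_succ_self _

lemma hatChi_eq (χ : Fin n → Bool) (i : Fin (2 * n)) : hatChi χ i = χ (half i) := rfl

lemma chiRank_hatChi (χ : Fin n → Bool) (i : Fin (2 * n)) :
    chiRank (hatChi χ) i = if χ (half i) then (i : ℕ) else 2 * (2 * n) - i := rfl

lemma chiRank_hatChi_lt (χ : Fin n → Bool) (i j : Fin (2 * n))
    (h : chiRank χ (half i) < chiRank χ (half j)) :
    chiRank (hatChi χ) i < chiRank (hatChi χ) j := by
  rw [chiRank_hatChi, chiRank_hatChi]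
  cases hi : χ (half i) <;> cases hj : χ (half j) <;>
    simp only [hi, hj, chiRank_of_eq_true, chiRank_of_eq_false, val_half, if_true,
      Bool.false_eq_true, if_false] at h ⊢ <;>
    omega

lemma sort_filter_half_mem (T : Finset (Fin n)) :
    ({i | half i ∈ T} : Finset (Fin (2 * n))).sort =
      T.sort.flatMap fun k ↦ [evenLift k, oddLift k] := by
  refine (Finset.sortedLT_sort _).eq_of_mem_iff (List.Pairwise.sortedLT ?_) fun i ↦ ?_
  · refine List.pairwise_flatMap.2 ⟨fun k _ ↦ by simpa using evenLift_lt_oddLift k, ?_⟩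
    refine T.sortedLT_sort.pairwise.imp fun {k l} hkl i hi j hj ↦ ?_
    rw [List.mem_pair, ← half_eq_iff] at hi hj
    subst hi hj
    simp only [Fin.lt_def, val_half] at hkl ⊢
    omega
  · simp [← half_eq_iff]

lemma phiV_mul_pair (φ : A → ℂ) (b : Fin (2 * n) → A) (T : Finset (Fin n)) :
    phiV φ (fun k ↦ b (evenLift k) * b (oddLift k)) T = phiV φ b {i | half i ∈ T} := by
  rw [phiV, phiV, sort_filter_half_mem]
  congr 1
  induction T.sort with
  | nil => rfl
  | cons k l ih => simp [ih, mul_assoc]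

lemma card_filter_half_mem (T : Finset (Fin n)) :
    ({i | half i ∈ T} : Finset (Fin (2 * n))).card = 2 * T.card := by
  rw [← Finset.length_sort (· ≤ ·), sort_filter_half_mem]
  simp [mul_comm]

lemma odd_card_filter_half_mem_and_lt {r : Fin n → ℕ} {r' : Fin (2 * n) → ℕ}
    (hr : Function.Injective r) (hrr' : ∀ i j, r (half i) < r (half j) → r' i < r' j)
    {T : Finset (Fin n)} {i j : Fin (2 * n)} (hi : half i ∈ T) (hj : half j = half i)
    (hji : r' j < r' i) :
    Odd ({l | half l ∈ T ∧ r' l < r' i} : Finset (Fin (2 * n))).card := by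
  have hinsert : ({l | half l ∈ T ∧ r' l < r' i} : Finset (Fin (2 * n))) =
      insert j ({l | half l ∈ T.filter (r · < r (half i))} : Finset (Fin (2 * n))) := by
    ext l
    simp only [Finset.mem_filter, Finset.mem_univ, true_and, Finset.mem_insert]
    constructor
    · rintro ⟨hl, hli⟩
      rcases lt_trichotomy (r (half l)) (r (half i)) with h | h | h
      · exact .inr ⟨hl, h⟩
      · exact .inl (eq_of_half_eq (hr h) hj (ne_of_apply_ne r' hli.ne) (ne_of_apply_ne r' hji.ne))
      · exact absurd (hrr' i l h) hli.not_gt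
    · rintro (rfl | ⟨hl, hli⟩)
      · exact ⟨hj ▸ hi, hji⟩
      · exact ⟨hl, hrr' l i hli⟩
  rw [hinsert, Finset.card_insert_of_notMem (by simp [hj]), card_filter_half_mem]
  exact odd_two_mul_add_one _

theorem Bcum_mul_pair (φ : A → ℂ) (hn : 1 ≤ n) (χ : Fin n → Bool) (b : Fin (2 * n) → A)
    (hodd : ∀ U : Finset (Fin (2 * n)), Odd U.card →
      Bcum φ (hatChi χ ∘ U.orderEmbOfFin rfl) (b ∘ U.orderEmbOfFin rfl) = 0) :
    Bcum φ χ (fun k ↦ b (evenLift k) * b (oddLift k)) = Bcum φ (hatChi χ) b := by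
  have hzero : ∀ (T : Finset (Fin n)) (i j : Fin (2 * n)), half i ∈ T → half j = half i →
      chiRank (hatChi χ) j < chiRank (hatChi χ) i →
      intervalSum (chiRank (hatChi χ)) (phiV φ b)
        {l | half l ∈ T ∧ chiRank (hatChi χ) l < chiRank (hatChi χ) i} = 0 := by
    intro T i j hi hj hji
    have hU := odd_card_filter_half_mem_and_lt (chiRank_injective χ) (chiRank_hatChi_lt χ) hi hj hji
    rw [intervalSum_eq_neg_Bcum φ _ _ (Finset.card_pos.1 hU.pos), hodd _ hU, neg_zero]
  have htransfer := intervalSum_preimage (chiRank_injective χ) (chiRank_injective (hatChi χ))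
    (fun k ↦ ⟨evenLift k, half_evenLift k⟩) (chiRank_hatChi_lt χ) (phiV φ b) hzero Finset.univ
  rw [Bcum_eq_neg_intervalSum φ hn, Bcum_eq_neg_intervalSum φ (by omega),
    funext (phiV_mul_pair φ b), htransfer]
  simp only [Finset.mem_univ, Finset.filter_true]

end Doubling

end BooleanCumulant

namespace EtaDiagonalPair

open BooleanCumulant

variable {A : Type*} [Monoid A] [StarMul A] {φ : A → ℂ} {x y : A} {n : ℕ}

theorem Bcum_mul_pair (h : EtaDiagonalPair φ x y) (hn : 1 ≤ n) (χ : Fin n → Bool)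
    (ε : Fin (2 * n) → Bool) :
    Bcum φ χ (fun k ↦
        pairElem x y (χ k) (ε (evenLift k)) * pairElem x y (χ k) (ε (oddLift k))) =
      Bcum φ (hatChi χ) (fun i ↦ pairElem x y (hatChi χ i) (ε i)) := by
  have hodd (U : Finset (Fin (2 * n))) (hU : Odd U.card) :
      Bcum φ (hatChi χ ∘ U.orderEmbOfFin rfl)
        ((fun i ↦ pairElem x y (hatChi χ i) (ε i)) ∘ U.orderEmbOfFin rfl) = 0 :=
    h _ hU.pos _ (ε ∘ U.orderEmbOfFin rfl) fun heven ↦ Nat.not_even_iff_odd.2 hU heven.1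
  rw [← BooleanCumulant.Bcum_mul_pair φ hn χ _ hodd]
  simp only [hatChi_eq, half_evenLift, half_oddLift]

/-- The last left position and the last right position are adjacent for `≺_χ̂`, and both are the
second position of their pair. -/
theorem Bcum_hatChi_eq_zero (h : EtaDiagonalPair φ x y) {χ : Fin n → Bool}
    (hχ : ¬ ∀ i j : Fin n, χ i = χ j) {ε : Fin (2 * n) → Bool}
    (hε : ∀ k l, ε (oddLift k) = ε (oddLift l)) :
    Bcum φ (hatChi χ) (fun i ↦ pairElem x y (hatChi χ i) (ε i)) = 0 := by
  have hside (b : Bool) : (Finset.univ.filter (χ · = b)).Nonempty := by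
    by_contra! hb
    have hne (i : Fin n) : χ i = !b :=
      Bool.eq_not.2 (Finset.filter_eq_empty_iff.1 hb (Finset.mem_univ i))
    exact hχ fun i j ↦ (hne i).trans (hne j).symm
  obtain ⟨k, hk, hkmax⟩ := Finset.exists_max_image _ id (hside true)
  obtain ⟨l, hl, hlmax⟩ := Finset.exists_max_image _ id (hside false)
  simp only [Finset.mem_filter_univ, id, Fin.le_def] at hk hkmax hl hlmax
  have hkl : chiRank (hatChi χ) (oddLift k) < chiRank (hatChi χ) (oddLift l) :=
    chiRank_hatChi_lt χ _ _ <| by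
      rw [half_oddLift, half_oddLift, chiRank_of_eq_true hk, chiRank_of_eq_false hl]
      omega
  have hgap : ∀ i, chiRank (hatChi χ) (oddLift k) < chiRank (hatChi χ) i →
      chiRank (hatChi χ) (oddLift l) ≤ chiRank (hatChi χ) i := by
    intro i hi
    have hik := hkmax (half i)
    have hil := hlmax (half i)
    simp only [chiRank_hatChi, half_oddLift, hk, hl, val_half, val_oddLift] at hi hik hil ⊢
    cases hc : χ (half i) <;>
      simp only [hc, if_true, Bool.false_eq_true, if_false, forall_const] at hi hik hil ⊢ <;>
      omega
  refine h _ (by have := k.pos; omega) _ _ fun ⟨_, hchain⟩ ↦ ?_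
  exact rel_of_isChain_of_consecutive (pairwise_chiSorted _) (List.isChain_map _ |>.1 hchain)
    (mem_chiSorted _ _) (mem_chiSorted _ _) hkl (fun i _ ↦ hgap i) (hε k l)

/-- The star pattern `s, !s, s, !s, …`. -/
def alternating (s : Bool) (i : Fin (2 * n)) : Bool := if i.val % 2 = 0 then s else !s

lemma alternating_evenLift (s : Bool) (k : Fin n) : alternating s (evenLift k) = s := by
  simp [alternating, evenLift]

lemma alternating_oddLift (s : Bool) (k : Fin n) : alternating s (oddLift k) = !s := by
  simp [alternating, oddLift]

lemma pairElem_alternating (x y : A) (c s : Bool) (i : Fin (2 * n)) :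
    pairElem x y c (alternating s i) =
      if i.val % 2 = 0 then pairElem x y c s else pairElem x y c (!s) :=
  apply_ite _ _ _ _

theorem Bcum_mul_pair_alternating (h : EtaDiagonalPair φ x y) (hn : 1 ≤ n) (χ : Fin n → Bool)
    (s : Bool) :
    Bcum φ χ (fun k ↦ pairElem x y (χ k) s * pairElem x y (χ k) (!s)) =
      Bcum φ (hatChi χ) (fun i ↦ pairElem x y (hatChi χ i) (alternating s i)) := by
  simpa only [alternating_evenLift, alternating_oddLift] using h.Bcum_mul_pair hn χ (alternating s)

end EtaDiagonalPair

open BooleanCumulant EtaDiagonalPair in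
theorem etaDiagonalPair_products_general {A : Type*} [Monoid A] [StarMul A] (φ : A → ℂ)
    (x y : A) (hxy : EtaDiagonalPair φ x y) (n : ℕ) (hn : 1 ≤ n) (χ : Fin n → Bool) :
    ((¬ ∀ i j : Fin n, χ i = χ j) →
      Bcum φ χ (fun k => if χ k then x * star x else y * star y) = 0 ∧
      Bcum φ χ (fun k => if χ k then star x * x else star y * y) = 0) ∧
    ((∀ i : Fin n, χ i = true) →
      Bcum φ χ (fun k => if χ k then x * star x else y * star y) =
        Bcum φ (hatChi χ)
          (fun i : Fin (2 * n) => if i.val % 2 = 0 then x else star x) ∧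
      Bcum φ χ (fun k => if χ k then star x * x else star y * y) =
        Bcum φ (hatChi χ)
          (fun i : Fin (2 * n) => if i.val % 2 = 0 then star x else x)) ∧
    ((∀ i : Fin n, χ i = false) →
      Bcum φ χ (fun k => if χ k then x * star x else y * star y) =
        Bcum φ (hatChi χ)
          (fun i : Fin (2 * n) => if i.val % 2 = 0 then y else star y) ∧
      Bcum φ χ (fun k => if χ k then star x * x else star y * y) =
        Bcum φ (hatChi χ)
          (fun i : Fin (2 * n) => if i.val % 2 = 0 then star y else y)) := by
  have hxxs : (fun k ↦ if χ k then x * star x else y * star y) =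
      fun k ↦ pairElem x y (χ k) false * pairElem x y (χ k) (!false) := by
    funext k; cases χ k <;> rfl
  have hxsx : (fun k ↦ if χ k then star x * x else star y * y) =
      fun k ↦ pairElem x y (χ k) true * pairElem x y (χ k) (!true) := by
    funext k; cases χ k <;> rfl
  have hzero (s : Bool) (hχ : ¬ ∀ i j, χ i = χ j) :
      Bcum φ (hatChi χ) (fun i ↦ pairElem x y (hatChi χ i) (alternating s i)) = 0 :=
    hxy.Bcum_hatChi_eq_zero hχ fun k l ↦ by rw [alternating_oddLift, alternating_oddLift]
  rw [hxxs, hxsx, hxy.Bcum_mul_pair_alternating hn, hxy.Bcum_mul_pair_alternating hn]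
  refine ⟨fun hχ ↦ ⟨hzero false hχ, hzero true hχ⟩, fun hχ ↦ ?_, fun hχ ↦ ?_⟩ <;>
    simp only [hatChi_eq, hχ, pairElem_alternating] <;>
    exact ⟨rfl, rfl⟩

/-- For an η-diagonal pair `(x,y)`: the Boolean (l,r)-cumulants of
`(xx*, yy*)` and of `(x*x, y*y)` vanish at non-constant `χ`, and at constant `χ` they are
given by ordinary Boolean cumulants with alternating arguments; in particular the
bi-Boolean η-series of `(xx*, yy*)` and `(x*x, y*y)` are diagonal. -/
theorem etaDiagonalPair_products
    {A : Type*} [Ring A] [Algebra ℂ A] [StarRing A] [StarModule ℂ A]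
    (φ : A →ₗ[ℂ] ℂ) (hφ1 : φ 1 = 1) (hφs : ∀ a : A, φ (star a) = starRingEnd ℂ (φ a))
    (x y : A) (hxy : EtaDiagonalPair (fun z => φ z) x y)
    (n : ℕ) (hn : 1 ≤ n) (χ : Fin n → Bool) :
    ((¬ ∀ i j : Fin n, χ i = χ j) →
      Bcum (fun z => φ z) χ (fun k => if χ k then x * star x else y * star y) = 0 ∧
      Bcum (fun z => φ z) χ (fun k => if χ k then star x * x else star y * y) = 0) ∧
    ((∀ i : Fin n, χ i = true) →
      Bcum (fun z => φ z) χ (fun k => if χ k then x * star x else y * star y) =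
        Bcum (fun z => φ z) (hatChi χ)
          (fun i : Fin (2 * n) => if i.val % 2 = 0 then x else star x) ∧
      Bcum (fun z => φ z) χ (fun k => if χ k then star x * x else star y * y) =
        Bcum (fun z => φ z) (hatChi χ)
          (fun i : Fin (2 * n) => if i.val % 2 = 0 then star x else x)) ∧
    ((∀ i : Fin n, χ i = false) →
      Bcum (fun z => φ z) χ (fun k => if χ k then x * star x else y * star y) =
        Bcum (fun z => φ z) (hatChi χ)
          (fun i : Fin (2 * n) => if i.val % 2 = 0 then y else star y) ∧
      Bcum (fun z => φ z) χ (fun k => if χ k then star x * x else star y * y) =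
        Bcum (fun z => φ z) (hatChi χ)
          (fun i : Fin (2 * n) => if i.val % 2 = 0 then star y else y)) :=
  etaDiagonalPair_products_general (fun z => φ z) x y hxy n hn χ
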